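/- arXiv:1409.4471 — 3 statements merged into one kernel-verified Lean document; each statement's English description precedes it below -/
import Mathlib

section
/- Let n ≥ 1 and let v : ℝⁿ → ℝⁿ be a continuously differentiable vector field with compact support, and let φ : ℝ → ℝⁿ → ℝⁿ be its flow, i.e. φ(0, x) = x for all x and for each x the curve t ↦ φ(t, x) has derivative v(φ(t, x)) at every t. Then for every compact set Ω ⊆ ℝⁿ and every t ∈ ℝ, the function s ↦ vol(φ(s, ·)(Ω)) (Lebesgue measure of the image of Ω under the time-s flow) is differentiable at t with derivative ∫_{φ(t,·)(Ω)} div v(x) dx, where div v(x) is the trace of the Fréchet derivative of v at x. -/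
open MeasureTheory

section helpers
open Filter Topology

theorem aux_det {E : Type*} [NormedAddCommGroup E] [NormedSpace ℝ E] [FiniteDimensional ℝ E]
    (K : ℝ) (hK : 0 ≤ K) (ε : ℝ) (hε : 0 < ε) :
    ∀ᶠ h : ℝ in 𝓝 0, ∀ A : E →L[ℝ] E, ‖A‖ ≤ K →
      |(1 + h • A).det - 1 - h * LinearMap.trace ℝ E (A : E →ₗ[ℝ] E)| ≤ ε * |h| := by
  classical
  let b := Module.finBasis ℝ E
  let T : (E →L[ℝ] E) →ₗ[ℝ] Matrix _ _ ℝ :=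
    (LinearMap.toMatrix b b).toLinearMap ∘ₗ (ContinuousLinearMap.coeLM ℝ)
  have hdet : ∀ A : E →L[ℝ] E, A.det = (T A).det := fun A => by
    simp [T, ContinuousLinearMap.det]
  have hT1 : T 1 = 1 := by
    simp only [T]
    exact LinearMap.toMatrix_one b
  have htr : ∀ A : E →L[ℝ] E, LinearMap.trace ℝ E (A : E →ₗ[ℝ] E) = (T A).trace := fun A => by
    simp [T, LinearMap.trace_eq_matrix_trace ℝ b]
  have hd : DifferentiableAt ℝ (fun A : E →L[ℝ] E => A.det) 1 := by
    have : (fun A : E →L[ℝ] E => A.det) = fun A => ∑ σ : Equiv.Perm _, ((Equiv.Perm.sign σ : ℤ) : ℝ) * ∏ i, T A (σ i) i := by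
      funext A
      rw [hdet, Matrix.det_apply']
    rw [this]
    have hent : ∀ i j, Differentiable ℝ (fun A : E →L[ℝ] E => T A i j) := fun i j => by
      let L : (E →L[ℝ] E) →ₗ[ℝ] ℝ := (LinearMap.proj j) ∘ₗ (LinearMap.proj i) ∘ₗ T
      exact (LinearMap.toContinuousLinearMap L).differentiable
    fun_prop
  have hD := hd.hasFDerivAt
  set D := fderiv ℝ (fun A : E →L[ℝ] E => A.det) 1 with hDdef
  have hDA : ∀ A, D A = LinearMap.trace ℝ E (A : E →ₗ[ℝ] E) := by
    intro A
    have h1 : HasDerivAt (fun h : ℝ => (1 + h • A).det) (D A) 0 := by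
      have hl : HasDerivAt (fun h : ℝ => (1 : E →L[ℝ] E) + h • A) A 0 := by
        simpa using ((hasDerivAt_id (0:ℝ)).smul_const A).const_add (1 : E →L[ℝ] E)
      have hD' : HasFDerivAt (fun A : E →L[ℝ] E => A.det) D (1 + (0:ℝ) • A) := by simpa using hD
      exact hD'.comp_hasDerivAt (0:ℝ) hl
    have h2 : HasDerivAt (fun h : ℝ => (1 + h • A).det) ((T A).trace) 0 := by
      let p := (1 + (Polynomial.X : Polynomial ℝ) • (T A).map Polynomial.C).det.divX.divX
      have : (fun h : ℝ => (1 + h • A).det) = fun h => 1 + (T A).trace * h + p.eval h * h ^ 2 := by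
        funext h
        rw [hdet, map_add, map_smul, hT1, Matrix.det_one_add_smul]
      rw [this]
      have := (((hasDerivAt_id (0:ℝ)).const_mul (T A).trace).const_add 1).add
        ((p.hasDerivAt 0).mul ((hasDerivAt_id (0:ℝ)).pow 2))
      refine (this.congr_deriv ?_).congr_of_eventuallyEq (Eventually.of_forall fun h => ?_)
      · simp
      · simp
    rw [h1.unique h2, htr]
  have ho := hD.isLittleO
  rw [Asymptotics.isLittleO_iff] at ho
  have ho := ho (show 0 < ε / (K + 1) by positivity)
  rw [Metric.eventually_nhds_iff] at ho
  obtain ⟨δ, hδ, ho⟩ := ho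
  rw [Metric.eventually_nhds_iff]
  refine ⟨δ / (K + 1), by positivity, fun h hh A hA => ?_⟩
  have hh' : |h| < δ / (K + 1) := by simpa using hh
  have hn : ‖h • A‖ ≤ |h| * (K + 1) := by
    rw [norm_smul, Real.norm_eq_abs]
    gcongr
    linarith
  have := @ho (1 + h • A) (by
    rw [dist_eq_norm, add_sub_cancel_left]
    rw [lt_div_iff₀ (by positivity)] at hh'
    linarith)
  rw [add_sub_cancel_left, map_smul, hDA, Real.norm_eq_abs] at this
  have h1 : (1 : E →L[ℝ] E).det = 1 := by rw [hdet, hT1, Matrix.det_one]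
  rw [h1, smul_eq_mul] at this
  refine this.trans ?_
  calc ε / (K + 1) * ‖h • A‖ ≤ ε / (K + 1) * (|h| * (K + 1)) := by gcongr
    _ = ε * |h| := by field_simp

/-- Lipschitz comparison of volumes. -/
theorem aux_lip {n : ℕ} (f g : EuclideanSpace ℝ (Fin n) → EuclideanSpace ℝ (Fin n))
    (Ω : Set (EuclideanSpace ℝ (Fin n))) (δ : ℝ) (hδ : 0 ≤ δ)
    (hf : ∀ x y, 1 / 2 * ‖x - y‖ ≤ ‖f x - f y‖)
    (hfg : ∀ x y, ‖(g x - f x) - (g y - f y)‖ ≤ δ * ‖x - y‖)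
    (hfin : volume (f '' Ω) ≠ ⊤) :
    (volume (g '' Ω)).toReal ≤ (1 + 2 * δ) ^ n * (volume (f '' Ω)).toReal := by
  have hinj : Function.Injective f := fun x y hxy => by
    have := hf x y
    rw [hxy, sub_self, norm_zero] at this
    have : ‖x - y‖ ≤ 0 := by linarith
    exact sub_eq_zero.1 (norm_le_zero_iff.1 this)
  let F := g ∘ Function.invFun f
  have hF : ∀ x, F (f x) = g x := fun x => by
    simp [F, Function.leftInverse_invFun hinj x]
  have himg : g '' Ω = F '' (f '' Ω) := by
    rw [Set.image_image]
    simp [hF]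
  have hL : LipschitzOnWith (Real.toNNReal (1 + 2 * δ)) F (f '' Ω) := by
    apply LipschitzOnWith.of_dist_le_mul
    rintro _ ⟨x, -, rfl⟩ _ ⟨y, -, rfl⟩
    rw [hF, hF, dist_eq_norm, dist_eq_norm, Real.coe_toNNReal _ (by positivity)]
    have h1 := hf x y
    have h2 := hfg x y
    have h3 : ‖g x - g y‖ ≤ ‖f x - f y‖ + ‖(g x - f x) - (g y - f y)‖ := by
      refine le_trans (le_of_eq ?_) (norm_add_le _ _)
      congr 1
      abel
    nlinarith
  have key : volume (g '' Ω) ≤ ENNReal.ofReal ((1 + 2 * δ) ^ n) * volume (f '' Ω) := by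
    have h := hL.hausdorffMeasure_image_le (d := (n : ℝ)) (by positivity)
    rw [← himg] at h
    have e := Measure.isAddLeftInvariant_eq_smul
      (volume : Measure (EuclideanSpace ℝ (Fin n))) (Measure.hausdorffMeasure (n : ℝ))
    rw [e, Measure.smul_apply, Measure.smul_apply, ENNReal.smul_def, ENNReal.smul_def,
      smul_eq_mul, smul_eq_mul, mul_left_comm]
    refine mul_le_mul_right (h.trans (le_of_eq ?_)) _
    rw [ENNReal.rpow_natCast, ENNReal.ofReal_pow (by positivity)]
    rfl
  have := ENNReal.toReal_mono (ENNReal.mul_ne_top ENNReal.ofReal_ne_top hfin) key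
  rwa [ENNReal.toReal_mul, ENNReal.toReal_ofReal (by positivity)] at this

/-- The explicit Euler step. -/
theorem aux_euler {E : Type*} [NormedAddCommGroup E] [NormedSpace ℝ E] [FiniteDimensional ℝ E]
    [MeasureSpace E] [BorelSpace E] [(volume : Measure E).IsAddHaarMeasure]
    (v : E → E)
    (hv : ContDiff ℝ 1 v) (hsupp : HasCompactSupport v)
    (hlow : ∀ᶠ h : ℝ in 𝓝 0, ∀ x y, 1 / 2 * ‖x - y‖ ≤ ‖(x + h • v x) - (y + h • v y)‖)
    (Ω : Set E) (hΩ : IsCompact Ω) :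
    HasDerivAt (fun h : ℝ => (volume ((fun x => x + h • v x) '' Ω)).toReal)
        (∫ x in Ω,
          LinearMap.trace ℝ E
            (fderiv ℝ v x : E →ₗ[ℝ] E)) 0 := by
  have hcf : Continuous (fderiv ℝ v) := hv.continuous_fderiv (by simp)
  obtain ⟨K, hK⟩ := (hsupp.fderiv ℝ).exists_bound_of_continuous hcf
  have hK0 : 0 ≤ K := (norm_nonneg _).trans (hK 0)
  set m := (volume Ω).toReal with hm
  have hfin : volume Ω < ⊤ := hΩ.measure_lt_top
  have hvol : ∀ᶠ h : ℝ in 𝓝 0, (volume ((fun x => x + h • v x) '' Ω)).toReal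
      = ∫ x in Ω, (1 + h • fderiv ℝ v x).det := by
    have hpos := aux_det (E := E) K hK0 1 one_pos
    have hcd : Continuous fun p : ℝ × E => (1 + p.1 • fderiv ℝ v p.2).det :=
      ContinuousLinearMap.continuous_det.comp (by fun_prop)
    have hpos : ∀ᶠ h : ℝ in 𝓝 0, ∀ x ∈ Ω, 0 < (1 + h • fderiv ℝ v x).det := by
      apply hΩ.eventually_forall_of_forall_eventually
      intro x hx
      have : (1 + (0:ℝ) • fderiv ℝ v x).det = 1 := by simp [ContinuousLinearMap.det]
      refine Filter.Tendsto.eventually_const_lt ?_ (hcd.tendsto ((0:ℝ), x))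
      simp only [this]
      exact one_pos
    filter_upwards [hlow, hpos] with h hl hp
    have hinj : Set.InjOn (fun x => x + h • v x) Ω := fun x _ y _ hxy => by
      have := hl x y
      rw [show x + h • v x = y + h • v y from hxy, sub_self, norm_zero] at this
      have : ‖x - y‖ ≤ 0 := by linarith
      exact sub_eq_zero.1 (norm_le_zero_iff.1 this)
    have hder : ∀ x ∈ Ω, HasFDerivWithinAt (fun x => x + h • v x) (1 + h • fderiv ℝ v x) Ω x := by
      intro x _
      have h1 := ((hv.differentiable (by simp)) x).hasFDerivAt
      exact ((hasFDerivAt_id x).add (h1.const_smul h)).hasFDerivWithinAt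
    have := integral_image_eq_integral_abs_det_fderiv_smul volume hΩ.measurableSet hder hinj
      (fun _ => (1:ℝ))
    rw [setIntegral_const, smul_eq_mul, mul_one, Measure.real] at this
    rw [this]
    refine setIntegral_congr_fun hΩ.measurableSet fun x hx => ?_
    simp only [smul_eq_mul, mul_one]
    exact abs_of_pos (hp x hx)
  have hint1 : ∀ h : ℝ, IntegrableOn (fun x => (1 + h • fderiv ℝ v x).det) Ω := fun h =>
    (Continuous.continuousOn (ContinuousLinearMap.continuous_det.comp (by fun_prop))).integrableOn_compact hΩ
  have hint2 : IntegrableOn (fun x => LinearMap.trace ℝ E (fderiv ℝ v x : E →ₗ[ℝ] E)) Ω := by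
    let L : (E →L[ℝ] E) →ₗ[ℝ] ℝ := LinearMap.trace ℝ E ∘ₗ ContinuousLinearMap.coeLM ℝ
    have hL : Continuous L := L.continuous_of_finiteDimensional
    exact (hL.comp hcf).continuousOn.integrableOn_compact hΩ
  have h0 : (volume ((fun x => x + (0:ℝ) • v x) '' Ω)).toReal = m := by simp [hm]
  rw [hasDerivAt_iff_isLittleO, Asymptotics.isLittleO_iff]
  intro c hc
  have hc' : 0 < c / (m + 1) := by positivity
  filter_upwards [hvol, aux_det (E := E) K hK0 _ hc'] with h h1 h2
  rw [h1, h0, sub_zero, smul_eq_mul, Real.norm_eq_abs, Real.norm_eq_abs]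
  have hm' : m = ∫ x in Ω, (1:ℝ) := by simp [hm, Measure.real]
  have e : (∫ x in Ω, (1 + h • fderiv ℝ v x).det) - m - h * (∫ x in Ω, LinearMap.trace ℝ E (fderiv ℝ v x : E →ₗ[ℝ] E))
      = ∫ x in Ω, ((1 + h • fderiv ℝ v x).det - 1 - h * LinearMap.trace ℝ E (fderiv ℝ v x : E →ₗ[ℝ] E)) := by
    have hi1 : IntegrableOn (fun x : E => (1:ℝ)) Ω := integrableOn_const hfin.ne
    have hi2 : IntegrableOn (fun x => (1 + h • fderiv ℝ v x).det - 1) Ω := (hint1 h).sub hi1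
    rw [integral_sub hi2 (hint2.const_mul h),
      integral_sub (hint1 h) hi1, integral_const_mul, hm']
  rw [e, ← Real.norm_eq_abs]
  refine (norm_setIntegral_le_of_norm_le_const hfin (fun x _ => h2 _ (hK x))).trans ?_
  rw [Measure.real, ← hm]
  have : c / (m + 1) * |h| * m ≤ c / (m + 1) * |h| * (m + 1) := by gcongr; linarith
  refine this.trans (le_of_eq ?_)
  have : 0 ≤ m := ENNReal.toReal_nonneg
  field_simp

section flow
variable {E : Type*} [NormedAddCommGroup E] [NormedSpace ℝ E]

theorem aux_gron {v : E → E} {L : NNReal} (hL : LipschitzWith L v) {φ : ℝ → E → E}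
    (hφ0 : ∀ x, φ 0 x = x) (hφ : ∀ x t, HasDerivAt (fun s => φ s x) (v (φ t x)) t)
    (s : ℝ) (x y : E) : ‖φ s x - φ s y‖ ≤ ‖x - y‖ * Real.exp (L * |s|) := by
  have main : ∀ (w : E → E) (ψ : ℝ → E → E), LipschitzWith L w → (∀ x, ψ 0 x = x) →
      (∀ x t, HasDerivAt (fun s => ψ s x) (w (ψ t x)) t) → ∀ s : ℝ, 0 ≤ s →
      ‖ψ s x - ψ s y‖ ≤ ‖x - y‖ * Real.exp (L * s) := by
    intro w ψ hw h0 h s hs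
    have hc : ∀ x, Continuous fun s => ψ s x := fun x =>
      continuous_iff_continuousAt.2 fun t => (h x t).continuousAt
    have := dist_le_of_trajectories_ODE (v := fun _ => w) (f := fun s => ψ s x)
      (g := fun s => ψ s y) (a := 0) (b := s) (δ := ‖x - y‖) (fun _ => hw)
      (hc x).continuousOn (fun t _ => (h x t).hasDerivWithinAt)
      (hc y).continuousOn (fun t _ => (h y t).hasDerivWithinAt)
      (by simp [h0, dist_eq_norm]) s ⟨hs, le_rfl⟩
    simpa [dist_eq_norm] using this
  rcases le_total 0 s with hs | hs
  · rw [abs_of_nonneg hs]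
    exact main v φ hL hφ0 hφ s hs
  · rw [abs_of_nonpos hs]
    have := main (fun x => - v x) (fun s x => φ (-s) x) hL.neg (by simpa using hφ0)
      (fun x t => by
        have := (hφ x (-t)).scomp t (hasDerivAt_neg t)
        simpa [Function.comp_def] using this) (-s) (by linarith)
    simpa using this

theorem aux_second {v : E → E} (hv : Differentiable ℝ v) {K η ω : ℝ} 
    (hK : ∀ x, ‖fderiv ℝ v x‖ ≤ K)
    (hω : ∀ p q, ‖p - q‖ < η → ‖fderiv ℝ v p - fderiv ℝ v q‖ ≤ ω)
    (a b a' b' : E) (ha : ‖a' - a‖ < η) (hb : ‖b' - b‖ < η) :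
    ‖(v a' - v a) - (v b' - v b)‖ ≤ ω * ‖a' - b'‖ + K * ‖(a' - b') - (a - b)‖ := by
  let z : ℝ → E := fun θ => v (b' + θ • (a' - b')) - v (b + θ • (a - b))
  let z' : ℝ → E := fun θ => fderiv ℝ v (b' + θ • (a' - b')) (a' - b')
    - fderiv ℝ v (b + θ • (a - b)) (a - b)
  have hl : ∀ (p q : E) (θ : ℝ), HasDerivAt (fun θ : ℝ => v (p + θ • q))
      (fderiv ℝ v (p + θ • q) q) θ := by
    intro p q θ
    have h1 : HasDerivAt (fun θ : ℝ => p + θ • q) q θ := by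
      simpa using ((hasDerivAt_id θ).smul_const q).const_add p
    exact (hv _).hasFDerivAt.comp_hasDerivAt θ h1
  have := norm_image_sub_le_of_norm_deriv_le_segment_01' (f := z) (f' := z')
    (C := ω * ‖a' - b'‖ + K * ‖(a' - b') - (a - b)‖)
    (fun θ _ => ((hl _ _ θ).sub (hl _ _ θ)).hasDerivWithinAt) (by
      intro θ hθ
      have e : z' θ = (fderiv ℝ v (b' + θ • (a' - b')) - fderiv ℝ v (b + θ • (a - b))) (a' - b')
          + fderiv ℝ v (b + θ • (a - b)) ((a' - b') - (a - b)) := by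
        simp only [z', map_sub, sub_apply]
        abel
      rw [e]
      refine (norm_add_le _ _).trans (add_le_add ?_ ?_)
      · refine (ContinuousLinearMap.le_opNorm _ _).trans ?_
        gcongr
        apply hω
        have e2 : (b' + θ • (a' - b')) - (b + θ • (a - b)) = (1 - θ) • (b' - b) + θ • (a' - a) := by
          module
        have hmem := convex_ball (0 : E) η (x := b' - b) (by simpa using hb)
          (y := a' - a) (by simpa using ha) (sub_nonneg.2 hθ.2.le) hθ.1 (by ring)
        rw [e2]
        simpa using hmem
      · refine (ContinuousLinearMap.le_opNorm _ _).trans ?_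
        gcongr
        exact hK _)
  refine le_trans (le_of_eq ?_) this
  have e3 : z 1 - z 0 = (v a' - v a) - (v b' - v b) := by
    simp [z]
  rw [e3]

theorem aux_flow {v : E → E} (hv : ContDiff ℝ 1 v) (hsupp : HasCompactSupport v)
    {φ : ℝ → E → E} {L : NNReal} (hL : LipschitzWith L v)
    (hφ0 : ∀ x, φ 0 x = x) (hφ : ∀ x t, HasDerivAt (fun s => φ s x) (v (φ t x)) t)
    (ε : ℝ) (hε : 0 < ε) :
    ∀ᶠ h : ℝ in 𝓝 0, ∀ x y,
      ‖(φ h x - (x + h • v x)) - (φ h y - (y + h • v y))‖ ≤ ε * |h| * ‖x - y‖ := by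
  have hcf : Continuous (fderiv ℝ v) := hv.continuous_fderiv (by simp)
  obtain ⟨K, hK⟩ := (hsupp.fderiv ℝ).exists_bound_of_continuous hcf
  have hK0 : 0 ≤ K := (norm_nonneg _).trans (hK 0)
  obtain ⟨M, hM⟩ := hsupp.exists_bound_of_continuous hv.continuous
  have hM0 : 0 ≤ M := (norm_nonneg _).trans (hM 0)
  have huc := (hsupp.fderiv ℝ).uniformContinuous_of_continuous hcf
  set C := Real.exp L with hC
  have hC0 : 0 < C := Real.exp_pos _
  obtain ⟨η, hη, hω⟩ := Metric.uniformContinuous_iff.1 huc (ε / (2 * C)) (by positivity)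
  -- displacement bound
  have hdisp : ∀ s x, ‖φ s x - x‖ ≤ M * |s| := by
    intro s x
    have := Convex.norm_image_sub_le_of_norm_hasDerivWithin_le (f := fun s => φ s x)
      (f' := fun s => v (φ s x)) (s := Set.univ) (x := 0) (y := s) (C := M)
      (fun t _ => (hφ x t).hasDerivWithinAt) (fun t _ => hM _) convex_univ trivial trivial
    simpa [hφ0] using this
  have hexp : ∀ s x y, |s| ≤ 1 → ‖φ s x - φ s y‖ ≤ C * ‖x - y‖ := by
    intro s x y hs
    refine (aux_gron hL hφ0 hφ s x y).trans ?_
    rw [mul_comm]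
    gcongr
    rw [hC]
    gcongr
    exact mul_le_of_le_one_right L.2 hs
  have hdiff : ∀ s x y, |s| ≤ 1 → ‖(φ s x - φ s y) - (x - y)‖ ≤ L * C * ‖x - y‖ * |s| := by
    intro s x y hs
    have := Convex.norm_image_sub_le_of_norm_hasDerivWithin_le (f := fun s => φ s x - φ s y)
      (f' := fun s => v (φ s x) - v (φ s y)) (s := Set.Icc (-1) 1) (x := 0) (y := s)
      (C := L * C * ‖x - y‖)
      (fun t _ => ((hφ x t).sub (hφ y t)).hasDerivWithinAt) (fun t ht => by
        refine (hL.norm_sub_le _ _).trans ?_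
        rw [mul_assoc]
        gcongr
        exact hexp t x y (abs_le.2 ht)) (convex_Icc _ _) (by simp) (abs_le.1 hs)
    simpa [hφ0] using this
  obtain ⟨r, hr, hr1, hr2, hr3⟩ : ∃ r : ℝ, 0 < r ∧ r ≤ 1 ∧ M * r < η ∧ K * (L * C * r) ≤ ε / 2 := by
    have h1 : ∀ᶠ r : ℝ in 𝓝[>] 0, r ≤ 1 := by
      filter_upwards [Ioc_mem_nhdsGT (zero_lt_one' ℝ)] with r h using h.2
    have h2 : ∀ᶠ r : ℝ in 𝓝[>] 0, M * r < η := by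
      have : Tendsto (fun r : ℝ => M * r) (𝓝 0) (𝓝 (M * 0)) := Continuous.tendsto (by fun_prop) 0
      exact nhdsWithin_le_nhds (this.eventually_lt_const (by simpa using hη))
    have h3 : ∀ᶠ r : ℝ in 𝓝[>] 0, K * (L * C * r) < ε / 2 := by
      have : Tendsto (fun r : ℝ => K * (L * C * r)) (𝓝 0) (𝓝 (K * (L * C * 0))) :=
        Continuous.tendsto (by fun_prop) 0
      exact nhdsWithin_le_nhds (this.eventually_lt_const (by simpa using hε))
    obtain ⟨r, ⟨⟨h1, h2⟩, h3⟩, h4⟩ := (((h1.and h2).and h3).and self_mem_nhdsWithin).exists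
    exact ⟨r, h4, h1, h2, h3.le⟩
  rw [Metric.eventually_nhds_iff]
  refine ⟨r, hr, fun h hh x y => ?_⟩
  have hh : |h| < r := by simpa using hh
  let ρ : ℝ → E := fun s => (φ s x - (x + s • v x)) - (φ s y - (y + s • v y))
  have hlin : ∀ (x : E) t, HasDerivAt (fun s : ℝ => x + s • v x) (v x) t := fun x t => by
    simpa using ((hasDerivAt_id t).smul_const (v x)).const_add x
  have := Convex.norm_image_sub_le_of_norm_hasDerivWithin_le (f := ρ)
      (f' := fun s => (v (φ s x) - v x) - (v (φ s y) - v y)) (s := Set.Icc (-r) r) (x := 0) (y := h)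
      (C := ε * ‖x - y‖)
      (fun t _ => (((hφ x t).sub (hlin x t)).sub ((hφ y t).sub (hlin y t))).hasDerivWithinAt)
      (fun t ht => by
        have ht : |t| ≤ r := abs_le.2 ht
        have hMt : M * |t| < η := lt_of_le_of_lt (by gcongr) hr2
        refine (aux_second (hv.differentiable (by simp)) hK (η := η) (ω := ε / (2 * C))
          (fun p q hpq => ?_) x y (φ t x) (φ t y) ?_ ?_).trans ?_
        · rw [← dist_eq_norm]
          exact (hω (by rwa [dist_eq_norm])).le
        · exact (hdisp t x).trans_lt hMt
        · exact (hdisp t y).trans_lt hMt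
        · have i1 := hexp t x y (ht.trans hr1)
          have i2 := hdiff t x y (ht.trans hr1)
          calc _ ≤ ε / (2 * C) * (C * ‖x - y‖) + K * (L * C * ‖x - y‖ * r) := by
                gcongr
                exact i2.trans (by gcongr)
            _ = ε / 2 * ‖x - y‖ + (K * (L * C * r)) * ‖x - y‖ := by field_simp
            _ ≤ ε / 2 * ‖x - y‖ + ε / 2 * ‖x - y‖ := by gcongr
            _ = ε * ‖x - y‖ := by ring)
      (convex_Icc _ _) (by simp [hr.le]) (abs_le.1 hh.le)
  have e0 : ρ 0 = 0 := by simp [ρ, hφ0]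
  rw [e0, sub_zero, sub_zero, Real.norm_eq_abs] at this
  calc _ ≤ ε * ‖x - y‖ * |h| := this
    _ = _ := by ring

end flow

/-- If `W` and `V` agree up to a factor `(1 + ε |h|)^n`, they have the same derivative. -/
theorem aux_squeeze (n : ℕ) (V W : ℝ → ℝ) (d : ℝ) (hV : HasDerivAt V d 0) (hV0 : ∀ h, 0 ≤ V h)
    (hW0 : ∀ h, 0 ≤ W h) (h0 : W 0 = V 0)
    (h1 : ∀ ε > 0, ∀ᶠ h : ℝ in 𝓝 0, W h ≤ (1 + ε * |h|) ^ n * V h ∧ V h ≤ (1 + ε * |h|) ^ n * W h) :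
    HasDerivAt W d 0 := by
  have key : (fun h => W h - V h) =o[𝓝 0] fun h : ℝ => h := by
    rw [Asymptotics.isLittleO_iff]
    intro c hc
    set m := V 0 + 1 with hm
    have hm0 : 0 < m := by have := hV0 0; linarith
    set ε := c / (6 * m * (n + 1)) with hε
    have hε0 : 0 < ε := by positivity
    have hVm : ∀ᶠ h in 𝓝 0, V h < m := hV.continuousAt.eventually_lt_const (by linarith)
    have hsm : ∀ᶠ h : ℝ in 𝓝 0, n * (ε * |h|) < 1 := by
      have : Tendsto (fun h : ℝ => n * (ε * |h|)) (𝓝 0) (𝓝 (n * (ε * |0|))) :=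
        Continuous.tendsto (by fun_prop) 0
      exact this.eventually_lt_const (by simp)
    filter_upwards [h1 ε hε0, hVm, hsm] with h ⟨ha, hb⟩ hVm hsm
    set u := n * (ε * |h|) with hu
    have hu0 : 0 ≤ u := by positivity
    have hp : (1 + ε * |h|) ^ n ≤ 1 + 2 * u := by
      have i1 : (1 + ε * |h|) ^ n ≤ Real.exp u := by
        rw [hu, Real.exp_nat_mul]
        gcongr
        rw [add_comm]
        exact Real.add_one_le_exp _
      have i2 := Real.abs_exp_sub_one_le (x := u) (by rw [abs_of_nonneg hu0]; exact hsm.le)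
      rw [abs_of_nonneg hu0] at i2
      linarith [le_abs_self (Real.exp u - 1)]
    have ha' : W h ≤ (1 + 2 * u) * V h := ha.trans (by have := hV0 h; gcongr)
    have hb' : V h ≤ (1 + 2 * u) * W h := hb.trans (by have := hW0 h; gcongr)
    have a1 := hV0 h
    have hW3 : W h ≤ 3 * m := by nlinarith
    have hle : |W h - V h| ≤ 2 * u * (3 * m) := by
      rw [abs_le]
      constructor <;> nlinarith
    rw [Real.norm_eq_abs, Real.norm_eq_abs]
    refine hle.trans ?_
    have e : c * |h| = 2 * ((n + 1) * (ε * |h|)) * (3 * m) := by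
      rw [hε]
      field_simp
      ring
    rw [e, hu]
    gcongr
    linarith
  rw [hasDerivAt_iff_isLittleO] at hV ⊢
  have := hV.add (by simpa using key)
  refine this.congr_left fun h => ?_
  simp only [h0]
  ring

end helpers

/-- Liouville's formula: the derivative of the volume of a compact set
transported by the flow of a `C¹` vector field equals the integral of the
divergence of the field over the transported set. -/
theorem stmt8 (n : ℕ) (hn : 1 ≤ n)
    (v : EuclideanSpace ℝ (Fin n) → EuclideanSpace ℝ (Fin n))
    (hv : ContDiff ℝ 1 v) (hsupp : HasCompactSupport v)
    (φ : ℝ → EuclideanSpace ℝ (Fin n) → EuclideanSpace ℝ (Fin n))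
    (hφ0 : ∀ x, φ 0 x = x)
    (hφ : ∀ x t, HasDerivAt (fun s => φ s x) (v (φ t x)) t) :
    ∀ (Ω : Set (EuclideanSpace ℝ (Fin n))), IsCompact Ω → ∀ t : ℝ,
      HasDerivAt (fun s => (volume (φ s '' Ω)).toReal)
        (∫ x in φ t '' Ω,
          LinearMap.trace ℝ (EuclideanSpace ℝ (Fin n))
            (fderiv ℝ v x : EuclideanSpace ℝ (Fin n) →ₗ[ℝ] EuclideanSpace ℝ (Fin n))) t := by
  intro Ω hΩ t
  obtain ⟨L, hL⟩ : ∃ L, LipschitzWith L v :=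
    hv.lipschitzWith_of_hasCompactSupport hsupp (by simp)
  have hcont : ∀ s, Continuous (φ s) := fun s => by
    refine (LipschitzWith.of_dist_le_mul (K := Real.toNNReal (Real.exp (L * |s|)))
      fun x y => ?_).continuous
    rw [Real.coe_toNNReal _ (Real.exp_pos _).le, dist_eq_norm, dist_eq_norm, mul_comm]
    exact aux_gron hL hφ0 hφ s x y
  have hgrp : ∀ s x, φ s x = φ (s - t) (φ t x) := by
    intro s x
    have := ODE_solution_unique_univ (v := fun _ => v) (s := fun _ => Set.univ) (K := L)
      (f := fun s => φ s x) (g := fun s => φ (s - t) (φ t x)) (t₀ := t)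
      (fun _ => hL.lipschitzOnWith) (fun s => ⟨hφ x s, trivial⟩)
      (fun s => ⟨(hφ (φ t x) (s - t)).comp_sub_const s t, trivial⟩) (by simp [hφ0])
    exact congrFun this s
  have hlow : ∀ᶠ h : ℝ in nhds 0, ∀ x y,
      3 / 4 * ‖x - y‖ ≤ ‖(x + h • v x) - (y + h • v y)‖ := by
    have : Filter.Tendsto (fun h : ℝ => |h| * L) (nhds 0) (nhds (|0| * L)) :=
      Continuous.tendsto (by fun_prop) 0
    filter_upwards [this.eventually_lt_const (u := 1 / 4) (by simp)] with h hh x y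
    have h1 : ‖h • (v x - v y)‖ ≤ |h| * L * ‖x - y‖ := by
      rw [norm_smul, Real.norm_eq_abs, mul_assoc]
      gcongr
      exact hL.norm_sub_le _ _
    have h2 : ‖x - y‖ ≤ ‖(x + h • v x) - (y + h • v y)‖ + ‖h • (v x - v y)‖ := by
      refine le_trans (le_of_eq ?_) (norm_sub_le _ _)
      congr 1
      module
    nlinarith [norm_nonneg (x - y)]
  have main : ∀ (Ω : Set (EuclideanSpace ℝ (Fin n))), IsCompact Ω →
      HasDerivAt (fun s => (volume (φ s '' Ω)).toReal)
        (∫ x in Ω, LinearMap.trace ℝ (EuclideanSpace ℝ (Fin n))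
            (fderiv ℝ v x : EuclideanSpace ℝ (Fin n) →ₗ[ℝ] EuclideanSpace ℝ (Fin n))) 0 := by
    intro Ω hΩ
    have hE := aux_euler v hv hsupp (hlow.mono fun h hh x y =>
      le_trans (by have := norm_nonneg (x - y); linarith) (hh x y)) Ω hΩ
    refine aux_squeeze n _ _ _ hE (fun _ => ENNReal.toReal_nonneg)
      (fun _ => ENNReal.toReal_nonneg) (by simp [hφ0]) ?_
    intro ε hε
    have hsm : ∀ᶠ h : ℝ in nhds 0, ε / 2 * |h| < 1 / 4 := by
      have : Filter.Tendsto (fun h : ℝ => ε / 2 * |h|) (nhds 0) (nhds (ε / 2 * |0|)) :=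
        Continuous.tendsto (by fun_prop) 0
      exact this.eventually_lt_const (by simp)
    filter_upwards [hlow, aux_flow hv hsupp hL hφ0 hφ (ε / 2) (by positivity), hsm] with h h1 h2 h3
    have e : 1 + ε * |h| = 1 + 2 * (ε / 2 * |h|) := by ring
    rw [e]
    have hvc := hv.continuous
    constructor
    · refine aux_lip (fun x => x + h • v x) (φ h) Ω _ (by positivity) (fun x y => ?_) h2
        (hΩ.image (by fun_prop)).measure_lt_top.ne
      exact le_trans (by have := norm_nonneg (x - y); linarith) (h1 x y)
    · refine aux_lip (φ h) (fun x => x + h • v x) Ω _ (by positivity) (fun x y => ?_)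
        (fun x y => ?_) (hΩ.image (hcont h)).measure_lt_top.ne
      · have i1 := h1 x y
        have i2 := h2 x y
        have i3 : ‖(x + h • v x) - (y + h • v y)‖ ≤ ‖φ h x - φ h y‖
            + ‖(φ h x - (x + h • v x)) - (φ h y - (y + h • v y))‖ := by
          refine le_trans (le_of_eq ?_) (norm_sub_le _ _)
          congr 1
          abel
        nlinarith [norm_nonneg (x - y)]
      · refine le_trans (le_of_eq ?_) (h2 x y)
        rw [← norm_neg]
        congr 1
        abel
  have := main _ (hΩ.image (hcont t))
  rw [← sub_self t] at this
  have := this.comp_sub_const t t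
  refine this.congr_of_eventuallyEq (Filter.Eventually.of_forall fun s => ?_)
  simp only [Set.image_image, ← hgrp]
end

section
/- Let C ≥ 0, δ ≥ 0, T > 0, and let H : ℝ → ℝ be differentiable on [0, T] with H(t) ≥ 0 for t ∈ [0, T], H(0) = 0, and H′(t) ≤ C·(√(H(t)) + δ) for all t ∈ [0, T]. Then for every t ∈ [0, T], H(t) ≤ (C·t/2 + √(2·C·δ·t))². -/
open Set

/-- The Grönwall-type comparison used in Lemma 4.7: if `H ≥ 0`, `H(0) = 0`
and `H' ≤ C(√H + δ)` on `[0, T]`, then `H(t) ≤ (Ct/2 + √(2Cδt))²`. -/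
theorem stmt9 (C δ T : ℝ) (hC : 0 ≤ C) (hδ : 0 ≤ δ) (hT : 0 < T)
    (H : ℝ → ℝ)
    (hdiff : ∀ t ∈ Icc (0:ℝ) T, DifferentiableAt ℝ H t)
    (hpos : ∀ t ∈ Icc (0:ℝ) T, 0 ≤ H t)
    (h0 : H 0 = 0)
    (hderiv : ∀ t ∈ Icc (0:ℝ) T, deriv H t ≤ C * (Real.sqrt (H t) + δ)) :
    ∀ t ∈ Icc (0:ℝ) T, H t ≤ (C * t / 2 + Real.sqrt (2 * C * δ * t))^2 := by
  intro t ht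
  have key : ∀ e : ℝ, 0 < e →
      H t ≤ (C * t / 2 + Real.sqrt ((2 * C * δ + e) * t + e))^2 := by
    intro e he
    have hCδ : 0 ≤ C * δ := mul_nonneg hC hδ
    have hp : ∀ x : ℝ, 0 ≤ x → 0 < (2 * C * δ + e) * x + e := by
      intro x hx
      have : 0 ≤ (2 * C * δ + e) * x := mul_nonneg (by nlinarith) hx
      linarith
    have hB : ∀ x : ℝ, 0 ≤ x → HasDerivAt
        (fun x => (C * x / 2 + Real.sqrt ((2 * C * δ + e) * x + e))^2)
        (2 * (C * x / 2 + Real.sqrt ((2 * C * δ + e) * x + e)) *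
          (C / 2 + (2 * C * δ + e) / (2 * Real.sqrt ((2 * C * δ + e) * x + e)))) x := by
      intro x hx
      have h1 : HasDerivAt (fun x : ℝ => (2 * C * δ + e) * x + e) (2 * C * δ + e) x := by
        simpa using ((hasDerivAt_id x).const_mul (2 * C * δ + e)).add_const e
      have h2 : HasDerivAt (fun x : ℝ => C * x / 2) (C / 2) x := by
        simpa using ((hasDerivAt_id x).const_mul C).div_const 2
      have h3 := (h2.add (h1.sqrt (hp x hx).ne')).pow 2
      refine HasDerivAt.congr_deriv (f := fun x => (C * x / 2 +
        Real.sqrt ((2 * C * δ + e) * x + e))^2) h3 ?_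
      simp
    refine image_le_of_deriv_right_lt_deriv_boundary' (f := H) (f' := deriv H) (a := 0) (b := T)
      (B := fun x => (C * x / 2 + Real.sqrt ((2 * C * δ + e) * x + e))^2)
      (fun x hx => (hdiff x hx).continuousAt.continuousWithinAt)
      (fun x hx => (hdiff x (Ico_subset_Icc_self hx)).hasDerivAt.hasDerivWithinAt)
      (by rw [h0]; positivity)
      (fun x hx => (hB x hx.1).continuousAt.continuousWithinAt)
      (fun x hx => (hB x hx.1).hasDerivWithinAt) ?_ ht
    intro x hx hHx
    have hd := hderiv x (Ico_subset_Icc_self hx)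
    have hs := Real.sqrt_pos.2 (hp x hx.1)
    have hx0 : 0 ≤ C * x / 2 := div_nonneg (mul_nonneg hC hx.1) (by norm_num)
    rw [hHx] at hd
    set s := Real.sqrt ((2 * C * δ + e) * x + e)
    rw [Real.sqrt_sq (by linarith)] at hd
    have e1 : 2 * (C * x / 2 + s) * (C / 2 + (2 * C * δ + e) / (2 * s))
        = C * (C * x / 2 + s) + (2 * C * δ + e) + (2 * C * δ + e) * (C * x / 2) / s := by
      field_simp
      ring
    have e2 : 0 ≤ (2 * C * δ + e) * (C * x / 2) / s :=
      div_nonneg (mul_nonneg (by nlinarith) hx0) hs.le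
    rw [e1]
    nlinarith
  have hcont : Continuous
      (fun e : ℝ => (C * t / 2 + Real.sqrt ((2 * C * δ + e) * t + e))^2) := by fun_prop
  have hlim := (hcont.tendsto 0).mono_left (nhdsWithin_le_nhds (s := Ioi (0:ℝ)))
  have := ge_of_tendsto hlim (Filter.eventually_of_mem self_mem_nhdsWithin fun e he => key e he)
  simpa using this
end

section
/- Let u ≥ 1 be a natural number, a : Fin u → ℝ, and let T = (ℝ/ℤ)^u be the u-dimensional torus with quotient map sending x ∈ ℝᵘ to its class. Let q : ℝ → T be the map q(t) = (t·a₁, …, t·a_u) mod ℤᵘ, and assume q has dense range in T. Let g : T → ℂ be continuous with g(q(0)) ≠ 0, and suppose there is d ∈ ℝ such that g(q(t)) = g(q(0))·e^{√−1·d·t} for all t ∈ ℝ. Then there exist integers k₁, …, k_u ∈ ℤ with d = 2π·(k₁a₁ + ⋯ + k_u a_u). -/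
open scoped Real

/-- Key step in Corollary 4.11: a continuous function on the torus which,
along a dense one-parameter subgroup with slope vector `a`, equals
`g(e)·e^{√-1 d t}`, must have `d = 2π Σ kⱼ aⱼ` for integers `kⱼ`. -/
theorem stmt12 (u : ℕ) (hu : 1 ≤ u) (a : Fin u → ℝ)
    (q : ℝ → (Fin u → AddCircle (1:ℝ)))
    (hq : ∀ t : ℝ, q t = fun i => ((t * a i : ℝ) : AddCircle (1:ℝ)))
    (hdense : DenseRange q)
    (g : (Fin u → AddCircle (1:ℝ)) → ℂ) (hg : Continuous g)
    (hg0 : g (q 0) ≠ 0) (d : ℝ)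
    (hgd : ∀ t : ℝ, g (q t) = g (q 0) * Complex.exp (Complex.I * d * t)) :
    ∃ k : Fin u → ℤ, d = 2 * π * ∑ i, (k i : ℝ) * a i := by
  by_contra! hne
  have hadd : ∀ s t, q (s + t) = q s + q t := by
    intro s t
    funext i
    simp [hq, add_mul]
  have htr : ∀ t x, g (x + q t) = g x * Complex.exp (Complex.I * d * t) := by
    intro t x
    have := DenseRange.equalizer (g := fun x => g (x + q t)) hdense
      (h := fun x => g x * Complex.exp (Complex.I * d * t))
      (by fun_prop) (by fun_prop) (by
        funext s
        simp only [Function.comp]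
        rw [← hadd, hgd, hgd s, mul_assoc (g (q 0)), ← Complex.exp_add]
        push_cast
        ring_nf)
    exact congrFun this x
  have hm : ∀ (n : Fin u → ℤ) t x, UnitAddTorus.mFourier n (x + q t) =
      UnitAddTorus.mFourier n x *
        Complex.exp (Complex.I * ((2 * π * ∑ i, (n i : ℝ) * a i : ℝ) : ℂ) * t) := by
    intro n t x
    have h1 : ∀ i, fourier (n i) ((x + q t) i) = fourier (n i) (x i) *
        Complex.exp (Complex.I * ((2 * π * ((n i : ℝ) * a i) : ℝ) : ℂ) * t) := by
      intro i
      rw [Pi.add_apply, hq]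
      simp only [fourier_apply, smul_add, AddCircle.toCircle_add, Circle.coe_mul]
      rw [← fourier_apply (n := n i) (x := ((t * a i : ℝ) : AddCircle (1:ℝ))), fourier_coe_apply]
      congr 2
      push_cast
      ring
    simp only [UnitAddTorus.mFourier, ContinuousMap.coe_mk]
    rw [Finset.prod_congr rfl (fun i _ => h1 i), Finset.prod_mul_distrib, ← Complex.exp_sum]
    congr 2
    push_cast
    simp only [Finset.mul_sum, Finset.sum_mul]
  have hc : ∀ n, UnitAddTorus.mFourierCoeff g n = 0 := by
    intro n
    set w : ℝ := d - 2 * π * ∑ i, (n i : ℝ) * a i with hw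
    have hw0 : w ≠ 0 := sub_ne_zero.mpr (hne n)
    have h1 : UnitAddTorus.mFourierCoeff g n = UnitAddTorus.mFourierCoeff g n * (-1) := by
      have hdef : UnitAddTorus.mFourierCoeff g n =
          ∫ x, UnitAddTorus.mFourier (-n) x • g x
            ∂(MeasureTheory.Measure.pi fun _ : Fin u => AddCircle.haarAddCircle (T := 1)) := rfl
      have hinv : (MeasureTheory.Measure.pi fun _ : Fin u =>
          AddCircle.haarAddCircle (T := 1)).IsAddLeftInvariant :=
        MeasureTheory.Measure.pi.isAddLeftInvariant _
      rw [hdef]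
      conv_lhs => rw [← MeasureTheory.integral_add_right_eq_self _ (q (π / w))]
      rw [← MeasureTheory.integral_mul_const]
      congr 1
      funext x
      rw [hm, htr, smul_eq_mul, smul_eq_mul, mul_mul_mul_comm, ← Complex.exp_add]
      congr 1
      rw [← Complex.exp_pi_mul_I, ← add_mul, ← mul_add, ← Complex.ofReal_add, mul_assoc,
        ← Complex.ofReal_mul]
      have : (2 * π * ∑ i, (((-n) i : ℤ) : ℝ) * a i + d) * (π / w) = π := by
        have : (2 * π * ∑ i, (((-n) i : ℤ) : ℝ) * a i + d) = w := by
          simp [hw]; ring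
        rw [this]; field_simp
      rw [this, mul_comm]
    have h2 : 2 * UnitAddTorus.mFourierCoeff g n = 0 := by linear_combination h1
    simpa using h2
  have hs := UnitAddTorus.hasSum_mFourier_series_apply_of_summable (f := ⟨g, hg⟩)
    (by
      have : UnitAddTorus.mFourierCoeff (⟨g, hg⟩ : C(UnitAddTorus (Fin u), ℂ)) = 0 := funext hc
      rw [this]; exact summable_zero) (q 0)
  simp only [ContinuousMap.coe_mk, hc, zero_smul] at hs
  exact hg0 (hs.unique hasSum_zero)
end
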